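/- Let f : M₁ ⇢ M₂ be an L∞ morphism of differential graded Lie algebras over a field K of characteristic 0 with M₂ homotopy abelian. If the linear part of f induces an injective morphism in cohomology H^*(M₁) → H^*(M₂), then M₁ is also homotopy abelian. -/

import Mathlib

/-!
Basic homotopical algebra of differential graded Lie algebras over a field of
characteristic zero, following [Iacono, "Deformations and obstructions of pairs (X,D)"].

A differential graded Lie algebra (DGLA) is encoded as a `K`-module together with an
internal `ℤ`-grading (a family of submodules whose direct sum is the whole module),
a differential of degree `+1` squaring to zero, and a bracket which is graded
skew-symmetric, satisfies the graded Jacobi identity and the graded Leibniz rule.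
-/

universe u v w

/-- A `ℤ`-graded cochain complex structure on a `K`-module `V`: an internal grading
together with a differential of degree `+1` squaring to zero. -/
structure CochainStruct (K : Type u) [Field K] (V : Type v) [AddCommGroup V] [Module K V] :
    Type (max u v) where
  grading : ℤ → Submodule K V
  isInternal : DirectSum.IsInternal grading
  d : V →ₗ[K] V
  d_degree : ∀ i : ℤ, ∀ x ∈ grading i, d x ∈ grading (i + 1)
  d_sq : ∀ x : V, d (d x) = 0

namespace CochainStruct

variable {K : Type u} [Field K] {V : Type v} [AddCommGroup V] [Module K V]
  {W : Type w} [AddCommGroup W] [Module K W]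

/-- Degree `i` cocycles. -/
def cocycles (c : CochainStruct K V) (i : ℤ) : Submodule K V :=
  c.grading i ⊓ LinearMap.ker c.d

/-- Degree `i` coboundaries, as a submodule of the degree `i` cocycles. -/
def coboundaries (c : CochainStruct K V) (i : ℤ) : Submodule K (c.cocycles i) :=
  Submodule.comap (c.cocycles i).subtype (c.grading i ⊓ LinearMap.range c.d)

/-- The degree `i` cohomology of a graded cochain complex. -/
def cohomology (c : CochainStruct K V) (i : ℤ) : Type v :=
  c.cocycles i ⧸ c.coboundaries i

instance (c : CochainStruct K V) (i : ℤ) : AddCommGroup (c.cohomology i) :=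
  inferInstanceAs (AddCommGroup (c.cocycles i ⧸ c.coboundaries i))

instance (c : CochainStruct K V) (i : ℤ) : Module K (c.cohomology i) :=
  inferInstanceAs (Module K (c.cocycles i ⧸ c.coboundaries i))

end CochainStruct

/-- A (degree zero) morphism of graded cochain complexes. -/
structure CochainMap {K : Type u} [Field K] {V : Type v} {W : Type w}
    [AddCommGroup V] [Module K V] [AddCommGroup W] [Module K W]
    (c : CochainStruct K V) (c' : CochainStruct K W) : Type (max u v w) where
  toFun : V →ₗ[K] W
  map_grading : ∀ i : ℤ, ∀ x ∈ c.grading i, toFun x ∈ c'.grading i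
  map_d : ∀ x : V, toFun (c.d x) = c'.d (toFun x)

namespace CochainMap

variable {K : Type u} [Field K] {V : Type v} {W : Type w}
  [AddCommGroup V] [Module K V] [AddCommGroup W] [Module K W]
  {c : CochainStruct K V} {c' : CochainStruct K W}

/-- The induced map on cocycles. -/
def cocyclesMap (f : CochainMap c c') (i : ℤ) : c.cocycles i →ₗ[K] c'.cocycles i :=
  f.toFun.restrict (p := c.cocycles i) (q := c'.cocycles i) fun x hx => by
    rcases Submodule.mem_inf.mp hx with ⟨h1, h2⟩
    refine Submodule.mem_inf.mpr ⟨f.map_grading i x h1, ?_⟩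
    simp only [LinearMap.mem_ker] at h2 ⊢
    rw [← f.map_d, h2, map_zero]

/-- The induced map in cohomology. -/
def cohMap (f : CochainMap c c') (i : ℤ) :
    c.cohomology i →ₗ[K] c'.cohomology i :=
  Submodule.mapQ (c.coboundaries i) (c'.coboundaries i) (f.cocyclesMap i) (by
    rintro ⟨x, hx⟩ hmem
    simp only [CochainStruct.coboundaries, Submodule.mem_comap] at hmem ⊢
    rcases Submodule.mem_inf.mp hmem with ⟨h1, h2⟩
    refine Submodule.mem_inf.mpr ⟨?_, ?_⟩
    · exact f.map_grading i x h1
    · rcases h2 with ⟨y, hy⟩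
      exact ⟨f.toFun y, by
        have := f.map_d y
        simp only [Submodule.coe_subtype] at hy ⊢
        rw [← this, hy]
        rfl⟩)

end CochainMap

/-- A differential graded Lie algebra structure on a `K`-module `L`:
a graded cochain complex together with a degree zero graded bracket which is
graded skew-symmetric and satisfies the graded Jacobi identity and the graded
Leibniz rule. -/
structure DGLAStruct (K : Type u) [Field K] (L : Type v) [AddCommGroup L] [Module K L]
    extends CochainStruct K L where
  bracket : L →ₗ[K] L →ₗ[K] L
  bracket_degree : ∀ i j : ℤ, ∀ x ∈ grading i, ∀ y ∈ grading j, bracket x y ∈ grading (i + j)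
  bracket_skew : ∀ i j : ℤ, ∀ x ∈ grading i, ∀ y ∈ grading j,
    bracket x y = -(((-1 : K) ^ (i * j)) • bracket y x)
  bracket_jacobi : ∀ i j : ℤ, ∀ x ∈ grading i, ∀ y ∈ grading j, ∀ z : L,
    bracket x (bracket y z) =
      bracket (bracket x y) z + ((-1 : K) ^ (i * j)) • bracket y (bracket x z)
  bracket_leibniz : ∀ i : ℤ, ∀ x ∈ grading i, ∀ y : L,
    d (bracket x y) = bracket (d x) y + ((-1 : K) ^ i) • bracket x (d y)

/-- A morphism of differential graded Lie algebras. -/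
structure DGLAStructHom {K : Type u} [Field K] {L : Type v} {M : Type w}
    [AddCommGroup L] [Module K L] [AddCommGroup M] [Module K M]
    (g : DGLAStruct K L) (h : DGLAStruct K M) : Type (max u v w) where
  toFun : L →ₗ[K] M
  map_grading : ∀ i : ℤ, ∀ x ∈ g.grading i, toFun x ∈ h.grading i
  map_d : ∀ x : L, toFun (g.d x) = h.d (toFun x)
  map_bracket : ∀ x y : L, toFun (g.bracket x y) = h.bracket (toFun x) (toFun y)

namespace DGLAStructHom

variable {K : Type u} [Field K] {L : Type v} {M : Type w}
  [AddCommGroup L] [Module K L] [AddCommGroup M] [Module K M]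
  {g : DGLAStruct K L} {h : DGLAStruct K M}

/-- The underlying morphism of complexes of a morphism of DGLAs. -/
def toCochainMap (f : DGLAStructHom g h) :
    CochainMap g.toCochainStruct h.toCochainStruct :=
  ⟨f.toFun, f.map_grading, f.map_d⟩

/-- A quasi-isomorphism of DGLAs is a morphism inducing bijections in cohomology. -/
def IsQuasiIso (f : DGLAStructHom g h) : Prop :=
  ∀ i : ℤ, Function.Bijective (f.toCochainMap.cohMap i)

end DGLAStructHom

/-- A bundled differential graded Lie algebra over `K`. -/
structure DGLA (K : Type u) [Field K] : Type (max u (v + 1)) where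
  carrier : Type v
  [acg : AddCommGroup carrier]
  [mod : Module K carrier]
  str : DGLAStruct K carrier

attribute [instance] DGLA.acg DGLA.mod

namespace DGLA

variable {K : Type u} [Field K]

/-- Two DGLAs are related if there is a quasi-isomorphism from the first to the second. -/
def qisRel : DGLA.{u, v} K → DGLA.{u, v} K → Prop := fun X Y =>
  ∃ f : DGLAStructHom X.str Y.str, f.IsQuasiIso

/-- Homotopy equivalence of DGLAs: the equivalence relation generated by
quasi-isomorphisms. -/
def HomotopyEquiv (X Y : DGLA.{u, v} K) : Prop :=
  Relation.EqvGen qisRel X Y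

/-- A DGLA is abelian if its bracket is trivial. -/
def IsAbelian (X : DGLA.{u, v} K) : Prop :=
  ∀ x y : X.carrier, X.str.bracket x y = 0

/-- A DGLA is homotopy abelian if it is homotopy equivalent (i.e. quasi-isomorphic,
under the equivalence relation generated by quasi-isomorphisms) to an abelian DGLA. -/
def HomotopyAbelian (X : DGLA.{u, v} K) : Prop :=
  ∃ Y : DGLA.{u, v} K, Y.IsAbelian ∧ X.HomotopyEquiv Y

end DGLA

/-- A zig-zag of morphisms of DGLAs (the backwards arrows being quasi-isomorphisms):
a morphism in the homotopy category of DGLAs, i.e. an `L∞` morphism of DGLAs. -/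
inductive ZigZag {K : Type u} [Field K] : DGLA.{u, v} K → DGLA.{u, v} K → Type (max u (v + 1))
  | refl (X : DGLA.{u, v} K) : ZigZag X X
  | fwd {X Y Z : DGLA.{u, v} K} (f : DGLAStructHom X.str Y.str) (t : ZigZag Y Z) : ZigZag X Z
  | bwd {X Y Z : DGLA.{u, v} K} (f : DGLAStructHom Y.str X.str) (hf : f.IsQuasiIso)
      (t : ZigZag Y Z) : ZigZag X Z

/-- The map induced in cohomology by a zig-zag of morphisms of DGLAs. -/
noncomputable def ZigZag.cohMap {K : Type u} [Field K] :
    ∀ {X Y : DGLA.{u, v} K}, ZigZag X Y → ∀ i : ℤ,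
      X.str.toCochainStruct.cohomology i →ₗ[K] Y.str.toCochainStruct.cohomology i
  | _, _, .refl _, _ => LinearMap.id
  | _, _, .fwd f t, i => (t.cohMap i).comp (f.toCochainMap.cohMap i)
  | _, _, .bwd f hf t, i =>
      (t.cohMap i).comp
        ((LinearEquiv.ofBijective (f.toCochainMap.cohMap i) (hf i)).symm.toLinearMap)

/-!
Being injective in cohomology only matters through a strict roof: inverting the backward arrows of
a zig-zag from `M₁` to an abelian DGLA `A` by homotopy pullbacks gives a quasi-isomorphism
`C → M₁` and a morphism `C → A` injective in cohomology. Over a field, the latter map of complexes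
splits in cohomology, so `A` maps linearly to `H(C)` in such a way that `C → A → H(C)` sends each
cocycle to its class. Since `A` and `H(C)` have trivial bracket, this composite is a morphism of
DGLAs, hence a quasi-isomorphism of `C` with the abelian DGLA `H(C)`.

Homotopy pullbacks are strict fibre products with the path object `L[t, dt]`. Characteristic zero
enters only there: integrating polynomials shows that all the evaluations `L[t, dt] → L` induce the
same isomorphism in cohomology.
-/

open DirectSum

namespace CochainStruct

variable {K : Type u} [Field K] {V : Type v} [AddCommGroup V] [Module K V]
  {W : Type w} [AddCommGroup W] [Module K W]

noncomputable instance (c : CochainStruct K V) : Decomposition c.grading :=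
  c.isInternal.chooseDecomposition

/-- The linear map on a graded module glued from linear maps on its homogeneous components. -/
noncomputable def lift (c : CochainStruct K V) (φ : ∀ i, c.grading i →ₗ[K] W) : V →ₗ[K] W :=
  toModule K ℤ W φ ∘ₗ (decomposeLinearEquiv c.grading).toLinearMap

theorem lift_of_mem (c : CochainStruct K V) (φ : ∀ i, c.grading i →ₗ[K] W) {i : ℤ} {x : V}
    (hx : x ∈ c.grading i) : c.lift φ x = φ i ⟨x, hx⟩ := by
  simp only [lift, LinearMap.comp_apply, LinearEquiv.coe_coe, decomposeLinearEquiv_apply,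
    decompose_of_mem c.grading hx]
  exact toModule_lof K i _

/-- The sign operator, multiplication by `(-1) ^ i` in degree `i`. It carries the Koszul signs of
bilinear formulas whose arguments need not be homogeneous. -/
noncomputable def sign (c : CochainStruct K V) : V →ₗ[K] V :=
  c.lift fun i => (-1 : K) ^ i • (c.grading i).subtype

theorem sign_of_mem (c : CochainStruct K V) {i : ℤ} {x : V} (hx : x ∈ c.grading i) :
    c.sign x = (-1 : K) ^ i • x :=
  c.lift_of_mem _ hx

theorem sign_mem (c : CochainStruct K V) {i : ℤ} {x : V} (hx : x ∈ c.grading i) :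
    c.sign x ∈ c.grading i :=
  c.sign_of_mem hx ▸ Submodule.smul_mem _ _ hx

theorem decompose_map (c : CochainStruct K V) (c' : CochainStruct K W) {k : ℤ} {φ : V →ₗ[K] W}
    (hφ : ∀ i, ∀ x ∈ c.grading i, φ x ∈ c'.grading (i + k)) (x : V) {i j : ℤ}
    (hij : i + k = j) : (decompose c'.grading (φ x) j : W) = φ (decompose c.grading x i) := by
  subst hij
  induction x using Decomposition.inductionOn c.grading with
  | zero => simp
  | @homogeneous l x =>
    obtain rfl | hli := eq_or_ne l i
    · rw [decompose_of_mem_same _ (hφ l x x.2), decompose_of_mem_same _ x.2]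
    · rw [decompose_of_mem_ne _ (hφ l x x.2) (by simpa using hli), decompose_of_mem_ne _ x.2 hli,
        map_zero]
  | add x y hx hy => simp [decompose_add, hx, hy]

theorem exists_mem_grading_d_eq (c : CochainStruct K V) {i : ℤ} {x : V} (hx : x ∈ c.grading i)
    (hd : x ∈ LinearMap.range c.d) : ∃ y ∈ c.grading (i - 1), c.d y = x := by
  obtain ⟨y, rfl⟩ := hd
  refine ⟨decompose c.grading y (i - 1), SetLike.coe_mem _, ?_⟩
  rw [← c.decompose_map c c.d_degree y (sub_add_cancel i 1), decompose_of_mem_same _ hx]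

/-- The cohomology class of a cocycle. -/
def cohClass (c : CochainStruct K V) (i : ℤ) : c.cocycles i →ₗ[K] c.cohomology i :=
  (c.coboundaries i).mkQ

theorem cohClass_surjective (c : CochainStruct K V) (i : ℤ) : Function.Surjective (c.cohClass i) :=
  (c.coboundaries i).mkQ_surjective

theorem cohClass_eq_zero_iff (c : CochainStruct K V) {i : ℤ} (x : c.cocycles i) :
    c.cohClass i x = 0 ↔ (x : V) ∈ LinearMap.range c.d :=
  (Submodule.Quotient.mk_eq_zero _).trans (and_iff_right x.2.1)

end CochainStruct

namespace CochainMap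

variable {K : Type u} [Field K] {V : Type v} {W : Type w}
  [AddCommGroup V] [Module K V] [AddCommGroup W] [Module K W]
  {c : CochainStruct K V} {c' : CochainStruct K W}

theorem map_mem_cocycles (f : CochainMap c c') {i : ℤ} {x : V} (hx : x ∈ c.cocycles i) :
    f.toFun x ∈ c'.cocycles i :=
  (f.cocyclesMap i ⟨x, hx⟩).2

theorem cohMap_cohClass (f : CochainMap c c') {i : ℤ} (x : c.cocycles i) :
    f.cohMap i (c.cohClass i x) = c'.cohClass i (f.cocyclesMap i x) :=
  rfl

theorem injective_cohMap_iff (f : CochainMap c c') (i : ℤ) :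
    Function.Injective (f.cohMap i) ↔
      ∀ x ∈ c.cocycles i, f.toFun x ∈ LinearMap.range c'.d → x ∈ LinearMap.range c.d := by
  rw [injective_iff_map_eq_zero, (c.cohClass_surjective i).forall, Subtype.forall]
  simp only [cohMap_cohClass, CochainStruct.cohClass_eq_zero_iff]
  rfl

theorem surjective_cohMap_iff (f : CochainMap c c') (i : ℤ) :
    Function.Surjective (f.cohMap i) ↔
      ∀ y ∈ c'.cocycles i, ∃ x ∈ c.cocycles i, f.toFun x - y ∈ LinearMap.range c'.d := by
  rw [Function.Surjective, (c'.cohClass_surjective i).forall, Subtype.forall]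
  simp only [(c.cohClass_surjective i).exists, Subtype.exists, cohMap_cohClass,
    ← sub_eq_zero (b := c'.cohClass i _), ← map_sub, CochainStruct.cohClass_eq_zero_iff]
  exact forall₂_congr fun _ _ => exists_congr fun _ =>
    ⟨fun ⟨hx, h⟩ => ⟨hx, h⟩, fun ⟨hx, h⟩ => ⟨hx, h⟩⟩

theorem cohMap_eq_of_sub_mem_range {f f' : CochainMap c c'} {i : ℤ}
    (h : ∀ x ∈ c.cocycles i, f.toFun x - f'.toFun x ∈ LinearMap.range c'.d) :
    f.cohMap i = f'.cohMap i := by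
  refine LinearMap.ext ((c.cohClass_surjective i).forall.2 fun x => ?_)
  rw [cohMap_cohClass, cohMap_cohClass, ← sub_eq_zero, ← map_sub,
    CochainStruct.cohClass_eq_zero_iff]
  exact h x x.2

end CochainMap

namespace DGLAStructHom

universe u₁ u₂ u₃

variable {K : Type u} [Field K] {L : Type u₁} {M : Type u₂} {N : Type u₃}
  [AddCommGroup L] [Module K L] [AddCommGroup M] [Module K M] [AddCommGroup N] [Module K N]
  {g : DGLAStruct K L} {h : DGLAStruct K M} {k : DGLAStruct K N}

/-- The identity morphism of a DGLA. -/
def id (g : DGLAStruct K L) : DGLAStructHom g g :=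
  ⟨LinearMap.id, fun _ _ hx => hx, fun _ => rfl, fun _ _ => rfl⟩

/-- The composite of two morphisms of DGLAs. -/
def comp (f' : DGLAStructHom h k) (f : DGLAStructHom g h) : DGLAStructHom g k where
  toFun := f'.toFun ∘ₗ f.toFun
  map_grading i x hx := f'.map_grading i _ (f.map_grading i x hx)
  map_d x := by simp [f.map_d, f'.map_d]
  map_bracket x y := by simp [f.map_bracket, f'.map_bracket]

theorem cohMap_id (i : ℤ) : (id g).toCochainMap.cohMap i = LinearMap.id :=
  LinearMap.ext ((g.cohClass_surjective i).forall.2 fun _ => rfl)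

theorem cohMap_comp (f' : DGLAStructHom h k) (f : DGLAStructHom g h) (i : ℤ) :
    (f'.comp f).toCochainMap.cohMap i = f'.toCochainMap.cohMap i ∘ₗ f.toCochainMap.cohMap i :=
  LinearMap.ext ((g.cohClass_surjective i).forall.2 fun _ => rfl)

theorem isQuasiIso_id (g : DGLAStruct K L) : (id g).IsQuasiIso := fun i => by
  rw [cohMap_id]
  exact Function.bijective_id

theorem IsQuasiIso.comp {f' : DGLAStructHom h k} {f : DGLAStructHom g h} (hf' : f'.IsQuasiIso)
    (hf : f.IsQuasiIso) : (f'.comp f).IsQuasiIso := fun i => by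
  rw [cohMap_comp]
  exact (hf' i).comp (hf i)

theorem decompose_map (f : DGLAStructHom g h) (x : L) (i : ℤ) :
    (decompose h.grading (f.toFun x) i : M) = f.toFun (decompose g.grading x i) :=
  g.decompose_map h.toCochainStruct (by simpa using f.map_grading) x (add_zero i)

theorem exists_mem_grading_map_eq {f : DGLAStructHom g h} (hf : Function.Surjective f.toFun)
    {i : ℤ} {y : M} (hy : y ∈ h.grading i) : ∃ x ∈ g.grading i, f.toFun x = y := by
  obtain ⟨x, rfl⟩ := hf y
  refine ⟨decompose g.grading x i, SetLike.coe_mem _, ?_⟩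
  rw [← f.decompose_map, decompose_of_mem_same _ hy]

end DGLAStructHom

section Internal

variable {K : Type u} [Field K] {V : Type v} [AddCommGroup V] [Module K V]
  {W : Type w} [AddCommGroup W] [Module K W] {ι : Type*} [DecidableEq ι]
  {G : ι → Submodule K V} {H : ι → Submodule K W}

theorem isInternal_submodule_prod (hG : IsInternal G) (hH : IsInternal H) :
    IsInternal fun i => (G i).prod (H i) := by
  rw [isInternal_submodule_iff_iSupIndep_and_iSup_eq_top] at hG hH ⊢
  refine ⟨fun i => ?_, ?_⟩
  · have hle : ⨆ (j) (_ : j ≠ i), (G j).prod (H j) ≤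
        (⨆ (j) (_ : j ≠ i), G j).prod (⨆ (j) (_ : j ≠ i), H j) :=
      iSup₂_le fun j hj => Submodule.prod_mono
        (le_iSup₂ (f := fun j _ => G j) j hj) (le_iSup₂ (f := fun j _ => H j) j hj)
    refine Disjoint.mono_right hle ?_
    rw [disjoint_iff, Submodule.prod_inf_prod, (hG.1 i).eq_bot, (hH.1 i).eq_bot,
      Submodule.prod_bot]
  · simp only [LinearMap.prod_eq_sup_map, iSup_sup_eq, ← Submodule.map_iSup, hG.2, hH.2,
      Submodule.map_top, LinearMap.sup_range_inl_inr]

theorem isInternal_submodule_finsupp (α : Type*) (hG : IsInternal G) :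
    IsInternal fun i => Finsupp.submodule fun _ : α => G i := by
  rw [isInternal_submodule_iff_iSupIndep_and_iSup_eq_top] at hG ⊢
  refine ⟨fun i => Submodule.disjoint_def.2 fun x hx hx' => Finsupp.ext fun a => ?_, ?_⟩
  · have hle : ⨆ (j) (_ : j ≠ i), Finsupp.submodule (fun _ : α => G j) ≤
        (⨆ (j) (_ : j ≠ i), G j).comap (Finsupp.lapply a) :=
      iSup₂_le fun j hj y hy => le_iSup₂ (f := fun j _ => G j) j hj (hy a)
    exact Submodule.disjoint_def.1 (hG.1 i) (x a) (hx a) (hle hx')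
  · simp only [Finsupp.submodule_eq_iSup]
    rw [iSup_comm]
    simp only [← Submodule.map_iSup, hG.2, Submodule.map_top, Finsupp.iSup_lsingle_range]

theorem isInternal_submodule_comap_equiv {κ : Type*} [DecidableEq κ] (e : κ ≃ ι)
    (hG : IsInternal G) : IsInternal (G ∘ e) := by
  rw [isInternal_submodule_iff_iSupIndep_and_iSup_eq_top] at hG ⊢
  exact ⟨hG.1.comp e.injective, (e.iSup_comp (g := G)).trans hG.2⟩

theorem isInternal_comap_subtype [Decomposition G] {S : Submodule K V}
    (hS : SetLike.IsHomogeneous G S) : IsInternal fun i => (G i).comap S.subtype := by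
  classical
  rw [isInternal_submodule_iff_iSupIndep_and_iSup_eq_top]
  refine ⟨fun i => Submodule.disjoint_def.2 fun x hx hx' => ?_, eq_top_iff.2 fun x _ => ?_⟩
  · have hle : ⨆ (j) (_ : j ≠ i), (G j).comap S.subtype ≤
        (⨆ (j) (_ : j ≠ i), G j).comap S.subtype :=
      iSup₂_le fun j hj => Submodule.comap_mono (le_iSup₂ (f := fun j _ => G j) j hj)
    exact Subtype.ext (Submodule.disjoint_def.1
      ((Decomposition.isInternal G).submodule_iSupIndep i) x hx (hle hx'))
  · have hsum : x = ∑ i ∈ (decompose G (x : V)).support, ⟨decompose G (x : V) i, hS i x.2⟩ :=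
      Subtype.ext (by simp [sum_support_decompose])
    rw [hsum]
    exact Submodule.sum_mem _ fun i _ => Submodule.mem_iSup_of_mem i
      (SetLike.coe_mem (decompose G (x : V) i))

theorem isInternal_range_lof (M : ι → Type*) [∀ i, AddCommGroup (M i)] [∀ i, Module K (M i)] :
    IsInternal fun i => LinearMap.range (lof K ι M i) := by
  rw [isInternal_submodule_iff_iSupIndep_and_iSup_eq_top]
  refine ⟨fun i => Submodule.disjoint_def.2 ?_, DFinsupp.iSup_range_lsingle⟩
  rintro _ ⟨m, rfl⟩ hm
  have hle : ⨆ (j) (_ : j ≠ i), LinearMap.range (lof K ι M j) ≤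
      LinearMap.ker (component K ι M i) :=
    iSup₂_le fun j hj => LinearMap.range_le_ker_iff.2 ((component_comp_lof ..).trans (dif_neg hj))
  have hm0 : m = 0 := by simpa only [LinearMap.mem_ker, component.lof_self] using hle hm
  rw [hm0, map_zero]

end Internal

namespace DGLAStruct

variable {K : Type u} [Field K] {L : Type v} [AddCommGroup L] [Module K L]
  {M : Type w} [AddCommGroup M] [Module K M]

/-- The product of two DGLAs. -/
def prod (g : DGLAStruct K L) (h : DGLAStruct K M) : DGLAStruct K (L × M) where
  grading i := (g.grading i).prod (h.grading i)
  isInternal := isInternal_submodule_prod g.isInternal h.isInternal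
  d := g.d.prodMap h.d
  d_degree i _ hx := ⟨g.d_degree i _ hx.1, h.d_degree i _ hx.2⟩
  d_sq _ := Prod.ext (g.d_sq _) (h.d_sq _)
  bracket := LinearMap.mk₂ K (fun x y => (g.bracket x.1 y.1, h.bracket x.2 y.2))
    (by simp) (by simp) (by simp) (by simp)
  bracket_degree i j _ hx _ hy :=
    ⟨g.bracket_degree i j _ hx.1 _ hy.1, h.bracket_degree i j _ hx.2 _ hy.2⟩
  bracket_skew i j _ hx _ hy :=
    Prod.ext (g.bracket_skew i j _ hx.1 _ hy.1) (h.bracket_skew i j _ hx.2 _ hy.2)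
  bracket_jacobi i j _ hx _ hy _ :=
    Prod.ext (g.bracket_jacobi i j _ hx.1 _ hy.1 _) (h.bracket_jacobi i j _ hx.2 _ hy.2 _)
  bracket_leibniz i _ hx _ :=
    Prod.ext (g.bracket_leibniz i _ hx.1 _) (h.bracket_leibniz i _ hx.2 _)

/-- The submodules underlying the sub-DGLAs of a DGLA. -/
structure IsSubDGLA (g : DGLAStruct K L) (S : Submodule K L) : Prop where
  isHomogeneous : SetLike.IsHomogeneous g.grading S
  d_mem : ∀ x ∈ S, g.d x ∈ S
  bracket_mem : ∀ x ∈ S, ∀ y ∈ S, g.bracket x y ∈ S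

/-- The DGLA structure on a sub-DGLA. -/
def restrict (g : DGLAStruct K L) {S : Submodule K L} (hS : g.IsSubDGLA S) :
    DGLAStruct K S where
  grading i := (g.grading i).comap S.subtype
  isInternal := isInternal_comap_subtype hS.isHomogeneous
  d := g.d.restrict hS.d_mem
  d_degree i x hx := g.d_degree i x hx
  d_sq x := Subtype.ext (g.d_sq x)
  bracket := LinearMap.mk₂ K (fun x y => ⟨g.bracket x y, hS.bracket_mem x x.2 y y.2⟩)
    (fun _ _ _ => Subtype.ext (by simp)) (fun _ _ _ => Subtype.ext (by simp))
    (fun _ _ _ => Subtype.ext (by simp)) (fun _ _ _ => Subtype.ext (by simp))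
  bracket_degree i j x hx y hy := g.bracket_degree i j x hx y hy
  bracket_skew i j x hx y hy := Subtype.ext (g.bracket_skew i j x hx y hy)
  bracket_jacobi i j x hx y hy z := Subtype.ext (g.bracket_jacobi i j x hx y hy z)
  bracket_leibniz i x hx y := Subtype.ext (g.bracket_leibniz i x hx y)

end DGLAStruct

namespace DGLAStructHom

universe u₁ u₂ u₃

variable {K : Type u} [Field K] {L : Type u₁} {M : Type u₂} {N : Type u₃}
  [AddCommGroup L] [Module K L] [AddCommGroup M] [Module K M] [AddCommGroup N] [Module K N]
  {g : DGLAStruct K L} {h : DGLAStruct K M} {k : DGLAStruct K N}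

/-- The first projection of a product of DGLAs. -/
def fst (g : DGLAStruct K L) (h : DGLAStruct K M) : DGLAStructHom (g.prod h) g :=
  ⟨LinearMap.fst K L M, fun _ _ hx => hx.1, fun _ => rfl, fun _ _ => rfl⟩

/-- The second projection of a product of DGLAs. -/
def snd (g : DGLAStruct K L) (h : DGLAStruct K M) : DGLAStructHom (g.prod h) h :=
  ⟨LinearMap.snd K L M, fun _ _ hx => hx.2, fun _ => rfl, fun _ _ => rfl⟩

/-- The inclusion of a sub-DGLA. -/
def subtype {S : Submodule K L} (hS : g.IsSubDGLA S) : DGLAStructHom (g.restrict hS) g :=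
  ⟨S.subtype, fun _ _ hx => hx, fun _ => rfl, fun _ _ => rfl⟩

/-- The submodule of `L × M` underlying the fibre product of `p : L → N` and `q : M → N`. -/
def fiberSubmodule (p : DGLAStructHom g k) (q : DGLAStructHom h k) : Submodule K (L × M) :=
  LinearMap.eqLocus (p.toFun ∘ₗ LinearMap.fst K L M) (q.toFun ∘ₗ LinearMap.snd K L M)

theorem mem_fiberSubmodule {p : DGLAStructHom g k} {q : DGLAStructHom h k} {x : L × M} :
    x ∈ fiberSubmodule p q ↔ p.toFun x.1 = q.toFun x.2 :=
  Iff.rfl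

theorem isSubDGLA_fiberSubmodule (p : DGLAStructHom g k) (q : DGLAStructHom h k) :
    (g.prod h).IsSubDGLA (fiberSubmodule p q) where
  isHomogeneous i x hx := by
    change p.toFun ((fst g h).toFun _) = q.toFun ((snd g h).toFun _)
    rw [← (fst g h).decompose_map, ← (snd g h).decompose_map, ← p.decompose_map, ← q.decompose_map]
    exact congrArg (fun y => (decompose k.grading y i : N)) hx
  d_mem x hx := (p.map_d x.1).trans ((congrArg k.d hx).trans (q.map_d x.2).symm)
  bracket_mem x hx y hy :=
    (p.map_bracket x.1 y.1).trans
      ((congrArg₂ (fun a b => k.bracket a b) hx hy).trans (q.map_bracket x.2 y.2).symm)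

/-- The fibre product of two morphisms of DGLAs with the same target. -/
def fiberProduct (p : DGLAStructHom g k) (q : DGLAStructHom h k) :
    DGLAStruct K (fiberSubmodule p q) :=
  (g.prod h).restrict (isSubDGLA_fiberSubmodule p q)

/-- The first projection of a fibre product of DGLAs. -/
def fiberFst (p : DGLAStructHom g k) (q : DGLAStructHom h k) :
    DGLAStructHom (fiberProduct p q) g :=
  (fst g h).comp (subtype (isSubDGLA_fiberSubmodule p q))

/-- The second projection of a fibre product of DGLAs. -/
def fiberSnd (p : DGLAStructHom g k) (q : DGLAStructHom h k) :
    DGLAStructHom (fiberProduct p q) h :=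
  (snd g h).comp (subtype (isSubDGLA_fiberSubmodule p q))

theorem comp_fiberFst (p : DGLAStructHom g k) (q : DGLAStructHom h k) :
    p.comp (fiberFst p q) = q.comp (fiberSnd p q) := by
  have hcomm : p.toFun ∘ₗ (fiberFst p q).toFun = q.toFun ∘ₗ (fiberSnd p q).toFun :=
    LinearMap.ext fun x => mem_fiberSubmodule.1 x.2
  simp only [comp, hcomm]

theorem surjective_cohMap_fiberFst (p : DGLAStructHom g k) {q : DGLAStructHom h k}
    (hq : Function.Surjective q.toFun) {i : ℤ}
    (hcoh : Function.Surjective (q.toCochainMap.cohMap i)) :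
    Function.Surjective ((fiberFst p q).toCochainMap.cohMap i) := by
  rw [CochainMap.surjective_cohMap_iff] at hcoh ⊢
  rintro a ha
  have hpa : p.toFun a ∈ k.cocycles i := p.toCochainMap.map_mem_cocycles ha
  obtain ⟨b, hb, hbe⟩ := hcoh _ hpa
  have hqb : q.toFun b ∈ k.cocycles i := q.toCochainMap.map_mem_cocycles hb
  obtain ⟨e, he, hde⟩ := k.exists_mem_grading_d_eq (sub_mem hqb.1 hpa.1) hbe
  obtain ⟨e, he', rfl⟩ := exists_mem_grading_map_eq hq he
  have hb' : h.d e ∈ h.grading i := by simpa using h.d_degree _ e he'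
  refine ⟨⟨(a, b - h.d e), ?_⟩, ⟨⟨ha.1, sub_mem hb.1 hb'⟩, ?_⟩, 0, ?_⟩
  · rw [mem_fiberSubmodule, map_sub, q.map_d, hde, sub_sub_cancel]
  · refine Subtype.ext (Prod.ext ha.2 ?_)
    exact (map_sub h.d b _).trans (by rw [h.d_sq, sub_zero, LinearMap.mem_ker.1 hb.2]; rfl)
  · exact (map_zero g.d).trans (sub_self a).symm

theorem injective_cohMap_fiberFst (p : DGLAStructHom g k) {q : DGLAStructHom h k}
    (hq : Function.Surjective q.toFun) {i : ℤ}
    (hinj : Function.Injective (q.toCochainMap.cohMap i))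
    (hsurj : Function.Surjective (q.toCochainMap.cohMap (i - 1))) :
    Function.Injective ((fiberFst p q).toCochainMap.cohMap i) := by
  rw [CochainMap.injective_cohMap_iff] at hinj ⊢
  rw [CochainMap.surjective_cohMap_iff] at hsurj
  rintro ⟨⟨a, b⟩, hab⟩ ⟨⟨ha, hb⟩, hd⟩ hexact
  have hdb : h.d b = 0 := congrArg (fun z : fiberSubmodule p q => z.1.2) hd
  obtain ⟨y, hy, rfl⟩ := g.exists_mem_grading_d_eq ha hexact
  obtain ⟨w, hw, rfl⟩ := h.exists_mem_grading_d_eq hb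
    (hinj b ⟨hb, hdb⟩ ⟨p.toFun y, (p.map_d y).symm.trans hab⟩)
  -- `y` and `w` need not agree in `N`, but the difference of their images is a cocycle.
  have hc : p.toFun y - q.toFun w ∈ k.cocycles (i - 1) := by
    refine ⟨sub_mem (p.map_grading _ y hy) (q.map_grading _ w hw), LinearMap.mem_ker.2 ?_⟩
    rw [map_sub, ← p.map_d, ← q.map_d, sub_eq_zero]
    exact hab
  obtain ⟨z, hz, e, (he : k.d e = q.toFun z - _)⟩ := hsurj _ hc
  obtain ⟨e, rfl⟩ := hq e
  refine ⟨⟨(y, w + z - h.d e), ?_⟩, Subtype.ext (Prod.ext rfl ?_)⟩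
  · rw [mem_fiberSubmodule, map_sub, map_add, q.map_d, he]
    abel
  · change h.d (w + z - h.d e) = h.d w
    rw [map_sub, map_add, h.d_sq, LinearMap.mem_ker.1 hz.2, add_zero, sub_zero]

theorem isQuasiIso_fiberFst (p : DGLAStructHom g k) {q : DGLAStructHom h k}
    (hq : Function.Surjective q.toFun) (hqis : q.IsQuasiIso) : (fiberFst p q).IsQuasiIso :=
  fun i => ⟨injective_cohMap_fiberFst p hq (hqis i).1 (hqis (i - 1)).2,
    surjective_cohMap_fiberFst p hq (hqis i).2⟩

end DGLAStructHom

/-- A derivation of degree zero of a DGLA, commuting with the differential. -/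
structure DGLADerivation {K : Type u} [Field K] {L : Type v} [AddCommGroup L] [Module K L]
    (g : DGLAStruct K L) where
  toFun : L →ₗ[K] L
  map_grading : ∀ i : ℤ, ∀ x ∈ g.grading i, toFun x ∈ g.grading i
  map_d : ∀ x : L, toFun (g.d x) = g.d (toFun x)
  map_bracket : ∀ x y : L,
    toFun (g.bracket x y) = g.bracket (toFun x) y + g.bracket x (toFun y)

theorem neg_one_zpow_sub {K : Type*} [DivisionRing K] (i j : ℤ) :
    (-1 : K) ^ (i - j) = (-1) ^ i * (-1) ^ j := by
  rw [zpow_sub₀ (neg_ne_zero.2 one_ne_zero), div_eq_mul_inv, ← inv_zpow, inv_neg_one]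

namespace DGLADerivation

variable {K : Type u} [Field K] {L : Type v} [AddCommGroup L] [Module K L]
  {g : DGLAStruct K L}

/-- The bracket of `L ⊕ dt L`, where `dt` has degree `1` and square zero: the pair `(a, b)` stands
for `a + dt b`, and moving `dt` past `a` produces the sign operator. -/
noncomputable def formsBracket (g : DGLAStruct K L) : L × L →ₗ[K] L × L →ₗ[K] L × L :=
  LinearMap.mk₂ K
    (fun x y => (g.bracket x.1 y.1, g.bracket x.2 y.1 + g.bracket (g.sign x.1) y.2))
    (fun _ _ _ => by simp [add_add_add_comm]) (fun _ _ _ => by simp)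
    (fun _ _ _ => by simp [add_add_add_comm]) (fun _ _ _ => by simp)

theorem formsBracket_apply (a b a' b' : L) : formsBracket g (a, b) (a', b') =
    (g.bracket a a', g.bracket b a' + g.bracket (g.sign a) b') :=
  rfl

/-- The differential `d + dt D` of `L ⊕ dt L`. -/
def formsD (D : DGLADerivation g) : L × L →ₗ[K] L × L :=
  (g.d ∘ₗ LinearMap.fst K L L).prod
    (D.toFun ∘ₗ LinearMap.fst K L L - g.d ∘ₗ LinearMap.snd K L L)

theorem formsD_apply (D : DGLADerivation g) (a b : L) :
    D.formsD (a, b) = (g.d a, D.toFun a - g.d b) :=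
  rfl

/-- The DGLA `L ⊕ dt L` with differential `d + dt D` attached to a derivation `D`. For the formal
derivative of polynomials it is the DGLA of polynomial differential forms on the line. -/
noncomputable def forms (D : DGLADerivation g) : DGLAStruct K (L × L) where
  grading i := (g.grading i).prod (g.grading (i - 1))
  isInternal := isInternal_submodule_prod g.isInternal
    (isInternal_submodule_comap_equiv (Equiv.subRight 1) g.isInternal)
  d := D.formsD
  d_degree := by
    rintro i ⟨a, b⟩ ⟨ha, hb⟩
    have hdb : g.d b ∈ g.grading i := by simpa using g.d_degree _ b hb
    exact ⟨g.d_degree i a ha, by simpa [formsD_apply] using sub_mem (D.map_grading i a ha) hdb⟩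
  d_sq := by
    rintro ⟨a, b⟩
    simp [formsD_apply, D.map_d, g.d_sq]
  bracket := formsBracket g
  bracket_degree := by
    rintro i j x ⟨hx₁, hx₂⟩ y ⟨hy₁, hy₂⟩
    refine ⟨g.bracket_degree i j _ hx₁ _ hy₁, add_mem ?_ ?_⟩
    · simpa [sub_add_eq_add_sub] using g.bracket_degree _ _ _ hx₂ _ hy₁
    · simpa [add_sub_assoc] using g.bracket_degree _ _ _ (g.sign_mem hx₁) _ hy₂
  bracket_skew := by
    rintro i j ⟨a, b⟩ ⟨ha, hb⟩ ⟨a', b'⟩ ⟨ha', hb'⟩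
    refine Prod.ext (g.bracket_skew i j a ha a' ha') ?_
    simp only [formsBracket_apply, Prod.snd_neg, Prod.smul_snd, g.sign_of_mem ha,
      g.sign_of_mem ha', g.bracket_skew _ _ b hb a' ha', map_smul, LinearMap.smul_apply,
      g.bracket_skew _ _ a ha b' hb', sub_mul, mul_sub, one_mul, mul_one, neg_one_zpow_sub]
    rcases Int.even_or_odd i with hi | hi <;> rcases Int.even_or_odd j with hj | hj <;>
    simp [hi.neg_one_zpow, hj.neg_one_zpow, add_comm]
  bracket_jacobi := by
    rintro i j ⟨a, b⟩ ⟨ha, hb⟩ ⟨a', b'⟩ ⟨ha', hb'⟩ ⟨p, q⟩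
    refine Prod.ext (g.bracket_jacobi i j a ha a' ha' p) ?_
    have haa' := g.sign_of_mem (g.bracket_degree i j a ha a' ha')
    simp only [formsBracket_apply, Prod.snd_add, Prod.smul_snd,
      g.sign_of_mem ha, g.sign_of_mem ha', haa', map_smul, LinearMap.smul_apply, map_add,
      LinearMap.add_apply, g.bracket_jacobi _ _ b hb a' ha', g.bracket_jacobi _ _ a ha b' hb',
      g.bracket_jacobi _ _ a ha a' ha', sub_mul, mul_sub, one_mul, mul_one, neg_one_zpow_sub,
      zpow_add₀ (neg_ne_zero.2 (one_ne_zero' K))]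
    rcases Int.even_or_odd i with hi | hi <;> rcases Int.even_or_odd j with hj | hj <;>
    simp [hi.neg_one_zpow, hj.neg_one_zpow] <;> abel
  bracket_leibniz := by
    rintro i ⟨a, b⟩ ⟨ha, hb⟩ ⟨p, q⟩
    refine Prod.ext (g.bracket_leibniz i a ha p) ?_
    simp only [formsBracket_apply, formsD_apply, Prod.snd_add, Prod.smul_snd,
      g.sign_of_mem ha, g.sign_of_mem (g.d_degree i a ha), map_smul,
      LinearMap.smul_apply, map_add, map_sub, LinearMap.sub_apply, D.map_bracket,
      g.bracket_leibniz _ b hb, g.bracket_leibniz _ a ha, neg_one_zpow_sub,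
      zpow_add₀ (neg_ne_zero.2 (one_ne_zero' K)), zpow_one]
    rcases Int.even_or_odd i with hi | hi <;> simp [hi.neg_one_zpow] <;> abel

/-- The projection `a + dt b ↦ a`. -/
noncomputable def formsFst (D : DGLADerivation g) : DGLAStructHom D.forms g :=
  ⟨LinearMap.fst K L L, fun _ _ hx => hx.1, fun _ => rfl, fun _ _ => rfl⟩

theorem mem_cocycles_forms_iff (D : DGLADerivation g) {a b : L} {i : ℤ} :
    (a, b) ∈ D.forms.cocycles i ↔
      a ∈ g.cocycles i ∧ b ∈ g.grading (i - 1) ∧ D.toFun a = g.d b := by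
  change ((a ∈ g.grading i ∧ b ∈ g.grading (i - 1)) ∧ (g.d a, D.toFun a - g.d b) = (0, 0)) ↔
    (a ∈ g.grading i ∧ g.d a = 0) ∧ _
  rw [Prod.mk.injEq, sub_eq_zero]
  tauto

end DGLADerivation

section Polynomial

variable {K : Type u} [Field K] {L : Type v} [AddCommGroup L] [Module K L]
  {M : Type w} [AddCommGroup M] [Module K M]

theorem single_mem_finsupp_submodule {α : Type*} {p : Submodule K L} (n : α) {x : L} (hx : x ∈ p) :
    Finsupp.single n x ∈ Finsupp.submodule fun _ : α => p := by
  classical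
  intro m
  rw [Finsupp.single_apply]
  split_ifs
  exacts [hx, p.zero_mem]

@[elab_as_elim]
theorem finsupp_submodule_induction {α : Type*} {p : Submodule K L}
    {P : ∀ a : α →₀ L, a ∈ Finsupp.submodule (fun _ => p) → Prop} (zero : P 0 (zero_mem _))
    (add : ∀ a b ha hb, P a ha → P b hb → P (a + b) (add_mem ha hb))
    (single : ∀ n x hx, P (Finsupp.single n x) (single_mem_finsupp_submodule n hx)) {a : α →₀ L}
    (ha : a ∈ Finsupp.submodule fun _ => p) : P a ha := by
  have ha' := ha
  rw [Finsupp.submodule_eq_iSup] at ha'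
  suffices ∃ ha, P a ha from this.2
  refine Submodule.iSup_induction _ (motive := fun a => ∃ ha, P a ha) ha' ?_ ⟨_, zero⟩ ?_
  · rintro n _ ⟨x, hx, rfl⟩
    exact ⟨_, single n x hx⟩
  · rintro a b ⟨ha, hPa⟩ ⟨hb, hPb⟩
    exact ⟨_, add a b ha hb hPa hPb⟩

/-- The bilinear map on polynomials, `∑ xₙ tⁿ` being encoded as `n ↦ xₙ`, that extends a bilinear
map on coefficients by `(x tᵐ, y tⁿ) ↦ B x y tᵐ⁺ⁿ`. -/
noncomputable def polyBilin (B : L →ₗ[K] L →ₗ[K] M) : (ℕ →₀ L) →ₗ[K] (ℕ →₀ L) →ₗ[K] (ℕ →₀ M) :=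
  Finsupp.lsum K fun m => LinearMap.flip (Finsupp.lsum K fun n =>
    LinearMap.flip (B.compr₂ (Finsupp.lsingle (m + n))))

theorem polyBilin_single (B : L →ₗ[K] L →ₗ[K] M) (m n : ℕ) (x y : L) :
    polyBilin B (Finsupp.single m x) (Finsupp.single n y) = Finsupp.single (m + n) (B x y) := by
  simp [polyBilin]

theorem finsupp_bilin_ext {α β : Type*} {N : Type*} [AddCommGroup N] [Module K N]
    {B B' : (α →₀ L) →ₗ[K] (β →₀ M) →ₗ[K] N}
    (h : ∀ m x n y, B (Finsupp.single m x) (Finsupp.single n y) =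
      B' (Finsupp.single m x) (Finsupp.single n y)) : B = B' :=
  Finsupp.lhom_ext fun m x => Finsupp.lhom_ext fun n y => h m x n y

variable (K L) in
/-- The formal derivative of polynomials with coefficients in a vector space. -/
noncomputable def polyDeriv : (ℕ →₀ L) →ₗ[K] (ℕ →₀ L) :=
  Finsupp.lsum K fun n => (n : K) • Finsupp.lsingle (n - 1)

theorem polyDeriv_single (n : ℕ) (x : L) :
    polyDeriv K L (Finsupp.single n x) = (n : K) • Finsupp.single (n - 1) x := by
  simp [polyDeriv]

variable (K L) in
/-- The primitive without constant term of polynomials with coefficients in a vector space. -/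
noncomputable def polyPrimitive : (ℕ →₀ L) →ₗ[K] (ℕ →₀ L) :=
  Finsupp.lsum K fun n => (n + 1 : K)⁻¹ • Finsupp.lsingle (n + 1)

theorem polyPrimitive_single (n : ℕ) (x : L) :
    polyPrimitive K L (Finsupp.single n x) = (n + 1 : K)⁻¹ • Finsupp.single (n + 1) x := by
  simp [polyPrimitive]

/-- The evaluation at `t` of polynomials with coefficients in a vector space. -/
noncomputable def polyEval (t : K) : (ℕ →₀ L) →ₗ[K] L :=
  Finsupp.lsum K fun n => t ^ n • LinearMap.id

theorem polyEval_single (t : K) (n : ℕ) (x : L) :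
    polyEval t (Finsupp.single n x) = t ^ n • x := by
  simp [polyEval]

theorem polyDeriv_polyPrimitive [CharZero K] (a : ℕ →₀ L) :
    polyDeriv K L (polyPrimitive K L a) = a := by
  suffices polyDeriv K L ∘ₗ polyPrimitive K L = LinearMap.id from LinearMap.congr_fun this a
  refine Finsupp.lhom_ext fun n x => ?_
  have hn : (n + 1 : K) ≠ 0 := by exact_mod_cast n.succ_ne_zero
  simp [polyPrimitive_single, polyDeriv_single, hn]

theorem polyPrimitive_polyDeriv [CharZero K] (a : ℕ →₀ L) :
    polyPrimitive K L (polyDeriv K L a) = a - Finsupp.single 0 (polyEval (0 : K) a) := by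
  suffices polyPrimitive K L ∘ₗ polyDeriv K L =
    LinearMap.id - Finsupp.lsingle 0 ∘ₗ polyEval (0 : K) from LinearMap.congr_fun this a
  refine Finsupp.lhom_ext fun n x => ?_
  rcases n with _ | n
  · simp [polyDeriv_single, polyEval_single]
  · have hn : (n + 1 : K) ≠ 0 := by exact_mod_cast n.succ_ne_zero
    simp [polyDeriv_single, polyPrimitive_single, polyEval_single, hn]

theorem polyDeriv_mapRange (φ : L →ₗ[K] M) (a : ℕ →₀ L) :
    polyDeriv K M (Finsupp.mapRange.linearMap φ a) =
      Finsupp.mapRange.linearMap φ (polyDeriv K L a) := by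
  suffices polyDeriv K M ∘ₗ Finsupp.mapRange.linearMap φ =
    Finsupp.mapRange.linearMap φ ∘ₗ polyDeriv K L from LinearMap.congr_fun this a
  exact Finsupp.lhom_ext fun n x => by simp [polyDeriv_single]

theorem polyPrimitive_mapRange (φ : L →ₗ[K] M) (a : ℕ →₀ L) :
    polyPrimitive K M (Finsupp.mapRange.linearMap φ a) =
      Finsupp.mapRange.linearMap φ (polyPrimitive K L a) := by
  suffices polyPrimitive K M ∘ₗ Finsupp.mapRange.linearMap φ =
    Finsupp.mapRange.linearMap φ ∘ₗ polyPrimitive K L from LinearMap.congr_fun this a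
  exact Finsupp.lhom_ext fun n x => by simp [polyPrimitive_single]

theorem polyEval_mapRange (t : K) (φ : L →ₗ[K] M) (a : ℕ →₀ L) :
    polyEval t (Finsupp.mapRange.linearMap φ a) = φ (polyEval t a) := by
  suffices polyEval t ∘ₗ Finsupp.mapRange.linearMap φ = φ ∘ₗ polyEval t from
    LinearMap.congr_fun this a
  exact Finsupp.lhom_ext fun n x => by simp [polyEval_single]

theorem polyEval_polyBilin (t : K) (B : L →ₗ[K] L →ₗ[K] M) (a b : ℕ →₀ L) :
    polyEval t (polyBilin B a b) = B (polyEval t a) (polyEval t b) := by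
  suffices (polyBilin B).compr₂ (polyEval t) = B.compl₁₂ (polyEval t) (polyEval t) from
    LinearMap.congr_fun₂ this a b
  refine finsupp_bilin_ext fun m x n y => ?_
  simp [polyBilin_single, polyEval_single, smul_smul, pow_add, mul_comm]

theorem polyDeriv_polyBilin (B : L →ₗ[K] L →ₗ[K] M) (a b : ℕ →₀ L) :
    polyDeriv K M (polyBilin B a b) =
      polyBilin B (polyDeriv K L a) b + polyBilin B a (polyDeriv K L b) := by
  suffices (polyBilin B).compr₂ (polyDeriv K M) =
    polyBilin B ∘ₗ polyDeriv K L + (polyBilin B).compl₂ (polyDeriv K L) from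
    LinearMap.congr_fun₂ this a b
  refine finsupp_bilin_ext fun m x n y => ?_
  rcases m with _ | m <;> rcases n with _ | n <;>
  simp [polyBilin_single, polyDeriv_single, ← add_assoc, add_right_comm, ← add_smul,
    -Finsupp.smul_single]

end Polynomial

namespace DGLAStruct

variable {K : Type u} [Field K] {L : Type v} [AddCommGroup L] [Module K L] (g : DGLAStruct K L)
  {i j : ℤ} {a b : ℕ →₀ L}

theorem polyBilin_bracket_mem (ha : a ∈ Finsupp.submodule fun _ => g.grading i)
    (hb : b ∈ Finsupp.submodule fun _ => g.grading j) :
    polyBilin g.bracket a b ∈ Finsupp.submodule fun _ => g.grading (i + j) := by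
  induction ha using finsupp_submodule_induction with
  | zero => simp
  | add a a' _ _ ha ha' => simpa using add_mem ha ha'
  | single m x hx =>
    induction hb using finsupp_submodule_induction with
    | zero => simp
    | add b b' _ _ hb hb' => simpa using add_mem hb hb'
    | single n y hy =>
      rw [polyBilin_single]
      exact single_mem_finsupp_submodule _ (g.bracket_degree i j x hx y hy)

theorem polyBilin_bracket_skew (ha : a ∈ Finsupp.submodule fun _ => g.grading i)
    (hb : b ∈ Finsupp.submodule fun _ => g.grading j) :
    polyBilin g.bracket a b = -((-1 : K) ^ (i * j) • polyBilin g.bracket b a) := by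
  induction ha using finsupp_submodule_induction with
  | zero => simp
  | add a a' _ _ ha ha' => simp [ha, ha', add_comm]
  | single m x hx =>
    induction hb using finsupp_submodule_induction with
    | zero => simp
    | add b b' _ _ hb hb' => simp [hb, hb', add_comm]
    | single n y hy =>
      simp only [polyBilin_single, g.bracket_skew i j x hx y hy, add_comm m n,
        Finsupp.smul_single, Finsupp.single_neg]

theorem polyBilin_bracket_jacobi (ha : a ∈ Finsupp.submodule fun _ => g.grading i)
    (hb : b ∈ Finsupp.submodule fun _ => g.grading j) (c : ℕ →₀ L) :
    polyBilin g.bracket a (polyBilin g.bracket b c) =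
      polyBilin g.bracket (polyBilin g.bracket a b) c +
        (-1 : K) ^ (i * j) • polyBilin g.bracket b (polyBilin g.bracket a c) := by
  induction c using Finsupp.induction_linear with
  | zero => simp
  | add c c' hc hc' => simp only [map_add, hc, hc', smul_add, add_add_add_comm]
  | single l z =>
    induction ha using finsupp_submodule_induction with
    | zero => simp
    | add a a' _ _ ha ha' => simp only [map_add, LinearMap.add_apply, ha, ha', smul_add,
        add_add_add_comm]
    | single m x hx =>
      induction hb using finsupp_submodule_induction with
      | zero => simp
      | add b b' _ _ hb hb' => simp only [map_add, LinearMap.add_apply, hb, hb', smul_add,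
          add_add_add_comm]
      | single n y hy =>
        simp only [polyBilin_single, g.bracket_jacobi i j x hx y hy, Finsupp.single_add,
          Finsupp.smul_single, add_assoc, add_left_comm n m l]

theorem polyBilin_bracket_leibniz (ha : a ∈ Finsupp.submodule fun _ => g.grading i)
    (b : ℕ →₀ L) :
    Finsupp.mapRange.linearMap g.d (polyBilin g.bracket a b) =
      polyBilin g.bracket (Finsupp.mapRange.linearMap g.d a) b +
        (-1 : K) ^ i • polyBilin g.bracket a (Finsupp.mapRange.linearMap g.d b) := by
  induction b using Finsupp.induction_linear with
  | zero => simp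
  | add b b' hb hb' => simp only [map_add, hb, hb', smul_add, add_add_add_comm]
  | single n y =>
    induction ha using finsupp_submodule_induction with
    | zero => simp
    | add a a' _ _ ha ha' => simp only [map_add, LinearMap.add_apply, ha, ha', smul_add,
        add_add_add_comm]
    | single m x hx =>
      simp only [polyBilin_single, Finsupp.mapRange.linearMap_apply, Finsupp.mapRange_single,
        g.bracket_leibniz i x hx, Finsupp.single_add, Finsupp.smul_single]

/-- The DGLA `L[t]` of polynomials with coefficients in a DGLA, with the coefficientwise
differential. -/
noncomputable def polynomial : DGLAStruct K (ℕ →₀ L) where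
  grading i := Finsupp.submodule fun _ => g.grading i
  isInternal := isInternal_submodule_finsupp ℕ g.isInternal
  d := Finsupp.mapRange.linearMap g.d
  d_degree i a ha n := g.d_degree i (a n) (ha n)
  d_sq a := Finsupp.ext fun n => g.d_sq (a n)
  bracket := polyBilin g.bracket
  bracket_degree _ _ _ ha _ hb := g.polyBilin_bracket_mem ha hb
  bracket_skew _ _ _ ha _ hb := g.polyBilin_bracket_skew ha hb
  bracket_jacobi _ _ _ ha _ hb c := g.polyBilin_bracket_jacobi ha hb c
  bracket_leibniz _ _ ha b := g.polyBilin_bracket_leibniz ha b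

/-- The formal derivative `d/dt` as a derivation of `L[t]`. -/
noncomputable def polynomialDeriv : DGLADerivation g.polynomial where
  toFun := polyDeriv K L
  map_grading i a ha := by
    induction ha using finsupp_submodule_induction with
    | zero => simp
    | add a a' _ _ ha ha' => simpa using add_mem ha ha'
    | single n x hx =>
      rw [polyDeriv_single]
      exact Submodule.smul_mem _ _ (single_mem_finsupp_submodule _ hx)
  map_d := polyDeriv_mapRange g.d
  map_bracket := polyDeriv_polyBilin g.bracket

/-- The evaluation of `L[t]` at `t`. -/
noncomputable def polynomialEval (t : K) : DGLAStructHom g.polynomial g where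
  toFun := polyEval t
  map_grading i a ha := by
    induction ha using finsupp_submodule_induction with
    | zero => simp
    | add a a' _ _ ha ha' => simpa using add_mem ha ha'
    | single n x hx =>
      rw [polyEval_single]
      exact Submodule.smul_mem _ _ hx
  map_d := polyEval_mapRange t g.d
  map_bracket := polyEval_polyBilin t g.bracket

/-- The path object `L[t, dt]` of a DGLA: the polynomial differential forms on the line with
coefficients in `L`. -/
noncomputable def path : DGLAStruct K ((ℕ →₀ L) × (ℕ →₀ L)) :=
  g.polynomialDeriv.forms

/-- The evaluation of `L[t, dt]` at a point of the line. -/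
noncomputable def pathEval (t : K) : DGLAStructHom g.path g :=
  (g.polynomialEval t).comp g.polynomialDeriv.formsFst

theorem pathEval_surjective (t : K) : Function.Surjective (g.pathEval t).toFun := fun x =>
  ⟨(Finsupp.single 0 x, 0), (polyEval_single t 0 x).trans (by simp)⟩

theorem mem_cocycles_path_iff {p q : ℕ →₀ L} : (p, q) ∈ g.path.cocycles i ↔
    p ∈ g.polynomial.cocycles i ∧ q ∈ g.polynomial.grading (i - 1) ∧
      polyDeriv K L p = Finsupp.mapRange.linearMap g.d q :=
  g.polynomialDeriv.mem_cocycles_forms_iff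

theorem single_zero_mem_cocycles_path {y : L} (hy : y ∈ g.cocycles i) :
    (Finsupp.single 0 y, 0) ∈ g.path.cocycles i := by
  refine g.mem_cocycles_path_iff.2
    ⟨⟨single_mem_finsupp_submodule 0 hy.1, ?_⟩, zero_mem _, by simp [polyDeriv_single]⟩
  change Finsupp.mapRange.linearMap g.d (Finsupp.single 0 y) = 0
  simp [LinearMap.mem_ker.1 hy.2]

theorem isQuasiIso_pathEval_zero [CharZero K] : (g.pathEval 0).IsQuasiIso := by
  refine fun i => ⟨?_, ?_⟩
  · rw [CochainMap.injective_cohMap_iff]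
    rintro ⟨p, q⟩ hpq ⟨y, (hy : g.d y = polyEval 0 p)⟩
    obtain ⟨-, -, hp⟩ := g.mem_cocycles_path_iff.1 hpq
    refine ⟨(Finsupp.single 0 y + polyPrimitive K L q, 0), Prod.ext ?_ ?_⟩
    · change Finsupp.mapRange.linearMap g.d (Finsupp.single 0 y + polyPrimitive K L q) = p
      rw [map_add, ← polyPrimitive_mapRange, ← hp, polyPrimitive_polyDeriv, ← hy]
      simp
    · change polyDeriv K L (Finsupp.single 0 y + polyPrimitive K L q) -
        Finsupp.mapRange.linearMap g.d 0 = q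
      simp [polyDeriv_polyPrimitive, polyDeriv_single]
  · rw [CochainMap.surjective_cohMap_iff]
    intro y hy
    refine ⟨_, g.single_zero_mem_cocycles_path hy, 0, ?_⟩
    change g.d 0 = polyEval (0 : K) (Finsupp.single 0 y) - y
    simp [polyEval_single]

theorem cohMap_pathEval [CharZero K] (t : K) (i : ℤ) :
    (g.pathEval t).toCochainMap.cohMap i = (g.pathEval 0).toCochainMap.cohMap i := by
  refine CochainMap.cohMap_eq_of_sub_mem_range ?_
  rintro ⟨p, q⟩ hpq
  obtain ⟨-, -, hp⟩ := g.mem_cocycles_path_iff.1 hpq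
  refine ⟨polyEval t (polyPrimitive K L q), ?_⟩
  change _ = polyEval t p - polyEval 0 p
  rw [← polyEval_mapRange, ← polyPrimitive_mapRange, ← hp, polyPrimitive_polyDeriv, map_sub,
    polyEval_single, pow_zero, one_smul]

end DGLAStruct

namespace DGLAStructHom

universe u₁ u₂ u₃

variable {K : Type u} [Field K] {L : Type u₁} {M : Type u₂} {N : Type u₃}
  [AddCommGroup L] [Module K L] [AddCommGroup M] [Module K M] [AddCommGroup N] [Module K N]
  {g : DGLAStruct K L} {h : DGLAStruct K M} {k : DGLAStruct K N}

/-- The mapping path object of a morphism `q : M → N`: pairs of an element of `M` and a path in `N`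
starting at its image. -/
noncomputable abbrev mappingPath (q : DGLAStructHom h k) :
    DGLAStruct K (fiberSubmodule q (k.pathEval 0)) :=
  fiberProduct q (k.pathEval 0)

/-- The evaluation of a mapping path object at the end point of the path. -/
noncomputable def mappingPathEnd (q : DGLAStructHom h k) : DGLAStructHom (mappingPath q) k :=
  (k.pathEval 1).comp (fiberSnd q (k.pathEval 0))

theorem mappingPathEnd_surjective (q : DGLAStructHom h k) :
    Function.Surjective (mappingPathEnd q).toFun := fun y => by
  have hmem : ((0 : M), ((Finsupp.single 1 y, 0) : (ℕ →₀ N) × (ℕ →₀ N))) ∈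
      fiberSubmodule q (k.pathEval 0) :=
    (map_zero q.toFun).trans ((polyEval_single (0 : K) 1 y).trans (by simp)).symm
  exact ⟨⟨_, hmem⟩, (polyEval_single (1 : K) 1 y).trans (by simp)⟩

theorem cohMap_mappingPathEnd [CharZero K] (q : DGLAStructHom h k) (i : ℤ) :
    (mappingPathEnd q).toCochainMap.cohMap i =
      q.toCochainMap.cohMap i ∘ₗ (fiberFst q (k.pathEval 0)).toCochainMap.cohMap i := by
  rw [mappingPathEnd, cohMap_comp, k.cohMap_pathEval, ← cohMap_comp, ← cohMap_comp, comp_fiberFst]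

theorem isQuasiIso_mappingPathEnd [CharZero K] {q : DGLAStructHom h k} (hq : q.IsQuasiIso) :
    (mappingPathEnd q).IsQuasiIso := fun i => by
  rw [cohMap_mappingPathEnd]
  exact (hq i).comp (isQuasiIso_fiberFst q (k.pathEval_surjective 0) k.isQuasiIso_pathEval_zero i)

/-- The homotopy pullback of two morphisms `p : L → N` and `q : M → N`: elements of `L` and `M`
together with a path in `N` joining their images. -/
noncomputable abbrev homotopyPullback (p : DGLAStructHom g k) (q : DGLAStructHom h k) :
    DGLAStruct K (fiberSubmodule p (mappingPathEnd q)) :=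
  fiberProduct p (mappingPathEnd q)

/-- The first projection of a homotopy pullback. -/
noncomputable def homotopyPullbackFst (p : DGLAStructHom g k) (q : DGLAStructHom h k) :
    DGLAStructHom (homotopyPullback p q) g :=
  fiberFst p (mappingPathEnd q)

/-- The second projection of a homotopy pullback. -/
noncomputable def homotopyPullbackSnd (p : DGLAStructHom g k) (q : DGLAStructHom h k) :
    DGLAStructHom (homotopyPullback p q) h :=
  (fiberFst q (k.pathEval 0)).comp (fiberSnd p (mappingPathEnd q))

theorem isQuasiIso_homotopyPullbackFst [CharZero K] (p : DGLAStructHom g k)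
    {q : DGLAStructHom h k} (hq : q.IsQuasiIso) : (homotopyPullbackFst p q).IsQuasiIso :=
  isQuasiIso_fiberFst p (mappingPathEnd_surjective q) (isQuasiIso_mappingPathEnd hq)

theorem cohMap_comp_homotopyPullbackFst [CharZero K] (p : DGLAStructHom g k)
    (q : DGLAStructHom h k) (i : ℤ) :
    p.toCochainMap.cohMap i ∘ₗ (homotopyPullbackFst p q).toCochainMap.cohMap i =
      q.toCochainMap.cohMap i ∘ₗ (homotopyPullbackSnd p q).toCochainMap.cohMap i := by
  rw [homotopyPullbackFst, homotopyPullbackSnd, ← cohMap_comp, comp_fiberFst, cohMap_comp,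
    cohMap_mappingPathEnd, cohMap_comp, LinearMap.comp_assoc]

end DGLAStructHom

namespace CochainMap

variable {K : Type u} [Field K] {V : Type v} {W : Type w}
  [AddCommGroup V] [Module K V] [AddCommGroup W] [Module K W]
  {c : CochainStruct K V} {c' : CochainStruct K W}

theorem exists_linearMap_eq_cohClass {f : CochainMap c c'} {i : ℤ}
    (hf : Function.Injective (f.cohMap i)) :
    ∃ r : W →ₗ[K] c.cohomology i, (∀ x : c.cocycles i, r (f.toFun x) = c.cohClass i x) ∧
      ∀ y, c'.d y ∈ c'.grading i → r (c'.d y) = 0 := by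
  obtain ⟨ρ, hρ⟩ := (f.cohMap i).exists_leftInverse_of_injective (LinearMap.ker_eq_bot.2 hf)
  obtain ⟨r, hr⟩ := (ρ ∘ₗ c'.cohClass i).exists_extend
  refine ⟨r, fun x => ?_, fun y hy => ?_⟩
  · exact (LinearMap.congr_fun hr (f.cocyclesMap i x)).trans
      (LinearMap.congr_fun hρ (c.cohClass i x))
  · refine (LinearMap.congr_fun hr ⟨c'.d y, hy, c'.d_sq y⟩).trans ?_
    rw [LinearMap.comp_apply, (c'.cohClass_eq_zero_iff _).2 ⟨y, rfl⟩, map_zero]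

end CochainMap

namespace CochainStruct

variable {K : Type u} [Field K] {V : Type v} [AddCommGroup V] [Module K V]
  {W : Type w} [AddCommGroup W] [Module K W]

/-- The total cohomology of a complex as an abelian DGLA with zero differential. -/
noncomputable def cohomologyDGLA (c : CochainStruct K V) :
    DGLAStruct K (⨁ i, c.cohomology i) where
  grading i := LinearMap.range (lof K ℤ c.cohomology i)
  isInternal := isInternal_range_lof c.cohomology
  d := 0
  d_degree := by simp
  d_sq := by simp
  bracket := 0
  bracket_degree := by simp
  bracket_skew := by simp
  bracket_jacobi := by simp
  bracket_leibniz := by simp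

theorem exists_cochainMap_cohomologyDGLA {c : CochainStruct K V} {c' : CochainStruct K W}
    {f : CochainMap c c'} (hf : ∀ i, Function.Injective (f.cohMap i)) :
    ∃ Φ : CochainMap c' c.cohomologyDGLA.toCochainStruct,
      ∀ i (x : c.cocycles i), Φ.toFun (f.toFun x) = lof K ℤ c.cohomology i (c.cohClass i x) := by
  choose r hrf hrd using fun i => CochainMap.exists_linearMap_eq_cohClass (hf i)
  let φ := c'.lift fun i => lof K ℤ c.cohomology i ∘ₗ r i ∘ₗ (c'.grading i).subtype
  have hφ : ∀ {i x}, x ∈ c'.grading i → φ x = lof K ℤ c.cohomology i (r i x) :=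
    fun hx => c'.lift_of_mem _ hx
  refine ⟨⟨φ, fun i x hx => ⟨r i x, (hφ hx).symm⟩, fun x => ?_⟩, fun i x => ?_⟩
  · change φ (c'.d x) = 0
    induction x using Decomposition.inductionOn c'.grading with
    | zero => simp
    | @homogeneous i x =>
      have hdx := c'.d_degree i x x.2
      rw [hφ hdx, hrd _ _ hdx, map_zero]
    | add x y hx hy => simp [hx, hy]
  · rw [← hrf]
    exact hφ (f.map_grading i x x.2.1)

end CochainStruct

namespace DGLAStructHom

variable {K : Type u} [Field K] {L : Type v} {M : Type w}
  [AddCommGroup L] [Module K L] [AddCommGroup M] [Module K M]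
  {g : DGLAStruct K L} {h : DGLAStruct K M}

theorem exists_isQuasiIso_cohomologyDGLA {f : DGLAStructHom g h}
    (hh : ∀ x y, h.bracket x y = 0) (hf : ∀ i, Function.Injective (f.toCochainMap.cohMap i)) :
    ∃ φ : DGLAStructHom g g.cohomologyDGLA, φ.IsQuasiIso := by
  obtain ⟨Φ, hΦ⟩ := CochainStruct.exists_cochainMap_cohomologyDGLA hf
  refine ⟨⟨Φ.toFun ∘ₗ f.toFun, fun i x hx => Φ.map_grading i _ (f.map_grading i x hx),
    fun x => ?_, fun x y => ?_⟩, fun i => ⟨?_, ?_⟩⟩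
  · rw [LinearMap.comp_apply, f.map_d, Φ.map_d]
    rfl
  · rw [LinearMap.comp_apply, f.map_bracket, hh, map_zero]
    rfl
  · rw [CochainMap.injective_cohMap_iff]
    rintro x hx ⟨y, hy⟩
    have hlof : lof K ℤ g.cohomology i (g.cohClass i ⟨x, hx⟩) = 0 :=
      (hΦ i ⟨x, hx⟩).symm.trans hy.symm
    rw [← g.cohClass_eq_zero_iff ⟨x, hx⟩, ← component.lof_self K i (g.cohClass i ⟨x, hx⟩), hlof,
      map_zero]
  · rw [CochainMap.surjective_cohMap_iff]
    rintro _ ⟨⟨ξ, rfl⟩, -⟩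
    obtain ⟨x, rfl⟩ := g.cohClass_surjective i ξ
    exact ⟨x, x.2, 0, (sub_eq_zero.2 (hΦ i x)).symm⟩

end DGLAStructHom

namespace ZigZag

variable {K : Type u} [Field K]

/-- The composite of two zig-zags. -/
def trans : ∀ {X Y Z : DGLA.{u, v} K}, ZigZag X Y → ZigZag Y Z → ZigZag X Z
  | _, _, _, .refl _, s => s
  | _, _, _, .fwd f t, s => .fwd f (t.trans s)
  | _, _, _, .bwd f hf t, s => .bwd f hf (t.trans s)

theorem cohMap_trans {X Y Z : DGLA.{u, v} K} (t : ZigZag X Y) (s : ZigZag Y Z) (i : ℤ) :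
    (t.trans s).cohMap i = s.cohMap i ∘ₗ t.cohMap i := by
  induction t with
  | refl => rfl
  | fwd f t ih => rw [trans, cohMap, ih, cohMap, LinearMap.comp_assoc]
  | bwd f hf t ih => rw [trans, cohMap, ih, cohMap, LinearMap.comp_assoc]

theorem cohMap_bwd_comp {X Y Z : DGLA.{u, v} K} (f : DGLAStructHom Y.str X.str)
    (hf : f.IsQuasiIso) (t : ZigZag Y Z) (i : ℤ) :
    (bwd f hf t).cohMap i ∘ₗ f.toCochainMap.cohMap i = t.cohMap i := by
  rw [cohMap, LinearMap.comp_assoc]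
  exact congrArg _ (LinearEquiv.ofBijective (f.toCochainMap.cohMap i) (hf i)).symm_comp

theorem exists_roof [CharZero K] {X Y : DGLA.{u, v} K} (t : ZigZag X Y) :
    ∃ (C : DGLA.{u, v} K) (q : DGLAStructHom C.str X.str) (g : DGLAStructHom C.str Y.str),
      q.IsQuasiIso ∧
        ∀ i, t.cohMap i ∘ₗ q.toCochainMap.cohMap i = g.toCochainMap.cohMap i := by
  induction t with
  | refl X => exact ⟨X, .id _, .id _, DGLAStructHom.isQuasiIso_id _, fun i => rfl⟩
  | fwd f t ih =>
    obtain ⟨C, q, g, hq, hg⟩ := ih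
    refine ⟨⟨_, f.homotopyPullback q⟩, f.homotopyPullbackFst q, g.comp (f.homotopyPullbackSnd q),
      f.isQuasiIso_homotopyPullbackFst hq, fun i => ?_⟩
    calc (t.cohMap i ∘ₗ f.toCochainMap.cohMap i) ∘ₗ (f.homotopyPullbackFst q).toCochainMap.cohMap i
      _ = t.cohMap i ∘ₗ q.toCochainMap.cohMap i ∘ₗ
          (f.homotopyPullbackSnd q).toCochainMap.cohMap i := by
        rw [LinearMap.comp_assoc, DGLAStructHom.cohMap_comp_homotopyPullbackFst]
      _ = (g.comp (f.homotopyPullbackSnd q)).toCochainMap.cohMap i := by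
        rw [← LinearMap.comp_assoc, hg, DGLAStructHom.cohMap_comp]
  | bwd f hf t ih =>
    obtain ⟨C, q, g, hq, hg⟩ := ih
    refine ⟨C, f.comp q, g, hf.comp hq, fun i => ?_⟩
    rw [DGLAStructHom.cohMap_comp, ← LinearMap.comp_assoc, cohMap_bwd_comp, hg]

end ZigZag

namespace DGLA

variable {K : Type u} [Field K] {X Y : DGLA.{u, v} K}

theorem HomotopyEquiv.exists_zigZag (h : X.HomotopyEquiv Y) :
    ∃ t : ZigZag X Y, ∀ i, Function.Bijective (t.cohMap i) := by
  rw [HomotopyEquiv, ← Relation.EqvGen.reflTransGen_symmGen] at h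
  induction h using Relation.ReflTransGen.head_induction_on with
  | refl => exact ⟨.refl Y, fun _ => Function.bijective_id⟩
  | head hXZ _ ih =>
    obtain ⟨t, ht⟩ := ih
    obtain ⟨f, hf⟩ | ⟨f, hf⟩ := hXZ
    · exact ⟨.fwd f t, fun i => (ht i).comp (hf i)⟩
    · exact ⟨.bwd f hf t, fun i => (ht i).comp (LinearEquiv.bijective _)⟩

theorem homotopyAbelian_of_injective_cohMap (hY : Y.IsAbelian) (f : DGLAStructHom X.str Y.str)
    (hf : ∀ i, Function.Injective (f.toCochainMap.cohMap i)) : X.HomotopyAbelian :=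
  ⟨⟨_, X.str.cohomologyDGLA⟩, fun _ _ => rfl,
    .rel _ _ (DGLAStructHom.exists_isQuasiIso_cohomologyDGLA hY hf)⟩

theorem HomotopyAbelian.of_isQuasiIso (hX : X.HomotopyAbelian) {q : DGLAStructHom X.str Y.str}
    (hq : q.IsQuasiIso) : Y.HomotopyAbelian := by
  obtain ⟨A, hA, hXA⟩ := hX
  exact ⟨A, hA, .trans _ _ _ (.symm _ _ (.rel _ _ ⟨q, hq⟩)) hXA⟩

end DGLA

/-- Let `f : M₁ ⇢ M₂` be an `L∞` morphism of differential graded Lie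
algebras over a field `K` of characteristic `0` (i.e. a morphism in the homotopy category
of DGLAs, encoded as a zig-zag of DGLA morphisms) with `M₂` homotopy abelian.  If `f`
induces an injective morphism in cohomology `H^*(M₁) → H^*(M₂)`, then `M₁` is also
homotopy abelian. -/
theorem linfty_injective_of_homotopy_abelian {K : Type u} [Field K] [CharZero K]
    {M₁ M₂ : DGLA.{u, v} K} (f : ZigZag M₁ M₂) (h₂ : M₂.HomotopyAbelian)
    (hinj : ∀ i : ℤ, Function.Injective (f.cohMap i)) :
    M₁.HomotopyAbelian := by
  obtain ⟨A, hA, hM₂A⟩ := h₂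
  obtain ⟨e, he⟩ := hM₂A.exists_zigZag
  obtain ⟨C, q, g, hq, hg⟩ := (f.trans e).exists_roof
  have hg_inj : ∀ i, Function.Injective (g.toCochainMap.cohMap i) := fun i => by
    rw [← hg, ZigZag.cohMap_trans]
    exact ((he i).1.comp (hinj i)).comp (hq i).1
  exact (DGLA.homotopyAbelian_of_injective_cohMap hA g hg_inj).of_isQuasiIso hq
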